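/- arXiv:0904.2792 — 3 statements merged into one kernel-verified Lean document; each statement's English description precedes it below -/
import Mathlib

section
/- For all n ≥ 1, β_n = (n+1)! - (n+1)·d_n - d_{n+1}. -/
open Classical

noncomputable section

/-- `π` has at least one fixed point. -/
def hasFP {n : ℕ} (π : Equiv.Perm (Fin n)) : Prop := ∃ i, π i = i

/-- The set of (1-based) values of the fixed points of `π`, viewing a permutation of
`Fin n` as a permutation of `[n] = {1, …, n}` via `i ↦ i + 1`. -/
def fixVals {n : ℕ} (π : Equiv.Perm (Fin n)) : Set ℕ :=
  {k | ∃ i : Fin n, π i = i ∧ (i : ℕ) + 1 = k}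

/-- The largest fixed point `ℓ(π)` (in 1-based indexing). -/
def lfp {n : ℕ} (π : Equiv.Perm (Fin n)) : ℕ := sSup (fixVals π)

/-- The smallest fixed point `s(π)` (in 1-based indexing). -/
def sfp {n : ℕ} (π : Equiv.Perm (Fin n)) : ℕ := sInf (fixVals π)

/-- `d n` is the number of derangements of `[n]`. -/
def d (n : ℕ) : ℕ := Set.ncard {π : Equiv.Perm (Fin n) | ∀ i, π i ≠ i}

/-- `a n k` is the number of permutations of `[n]` with at least one fixed point
whose largest fixed point equals `k`. -/
def a (n k : ℕ) : ℕ := Set.ncard {π : Equiv.Perm (Fin n) | hasFP π ∧ lfp π = k}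

/-- `b n k` is the number of permutations of `[n]` with at least one fixed point
whose smallest fixed point equals `k`. -/
def b (n k : ℕ) : ℕ := Set.ncard {π : Equiv.Perm (Fin n) | hasFP π ∧ sfp π = k}

/-- `alpha n` is the sum of the largest fixed points over all non-derangements of `[n]`. -/
def alpha (n : ℕ) : ℕ :=
  ∑ π ∈ Finset.univ.filter (fun π : Equiv.Perm (Fin n) => hasFP π), lfp π

/-- `beta n` is the sum of the smallest fixed points over all non-derangements of `[n]`. -/
def beta (n : ℕ) : ℕ :=
  ∑ π ∈ Finset.univ.filter (fun π : Equiv.Perm (Fin n) => hasFP π), sfp π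

/-- permutations with no fixed point among the first `k` points -/
def NF (n k : ℕ) : Finset (Equiv.Perm (Fin n)) :=
  Finset.univ.filter (fun π => ∀ i : Fin n, (i : ℕ) < k → π i ≠ i)

lemma NF_zero (n : ℕ) : (NF n 0).card = n.factorial := by
  simp [NF, Fintype.card_perm]

lemma NF_self (n : ℕ) : (NF n n).card = d n := by
  unfold d NF
  rw [Set.ncard_eq_toFinset_card']
  congr 1
  ext π
  simp

/-- insert a fixed point at `p` -/
def insFix {n : ℕ} (p : Fin (n+1)) (π : Equiv.Perm (Fin n)) : Equiv.Perm (Fin (n+1)) :=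
  (finSuccEquiv' p).symm.permCongr (Equiv.optionCongr π)

lemma insFix_self {n : ℕ} (p : Fin (n+1)) (π : Equiv.Perm (Fin n)) : insFix p π p = p := by
  simp [insFix, Equiv.permCongr_apply]

lemma insFix_succAbove {n : ℕ} (p : Fin (n+1)) (π : Equiv.Perm (Fin n)) (i : Fin n) :
    insFix p π (p.succAbove i) = p.succAbove (π i) := by
  simp [insFix, Equiv.permCongr_apply]

lemma insFix_mem {n : ℕ} (p : Fin (n+1)) (π : Equiv.Perm (Fin n)) :
    insFix p π ∈ NF (n+1) p ↔ π ∈ NF n p := by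
  have key : ∀ i : Fin n, ((p.succAbove i : Fin (n+1)) : ℕ) < p ↔ (i : ℕ) < p := by
    intro i
    have := Fin.succAbove_lt_iff_castSucc_lt p i
    exact this
  simp only [NF, Finset.mem_filter, Finset.mem_univ, true_and]
  constructor
  · intro h i hi he
    exact h (p.succAbove i) ((key i).2 hi) (by rw [insFix_succAbove, he])
  · intro h j hj he
    obtain rfl | ⟨i, rfl⟩ := Fin.eq_self_or_eq_succAbove p j
    · exact lt_irrefl _ hj
    · rw [insFix_succAbove] at he
      exact h i ((key i).1 hj) (Fin.succAbove_right_injective he)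

lemma insFix_surj {n : ℕ} (p : Fin (n+1)) (σ : Equiv.Perm (Fin (n+1))) (h : σ p = p) :
    ∃ π, insFix p π = σ := by
  set τ := (finSuccEquiv' p).permCongr σ with hτ
  have h0 : τ none = none := by simp [hτ, Equiv.permCongr_apply, h]
  refine ⟨Equiv.removeNone τ, ?_⟩
  have : Equiv.optionCongr (Equiv.removeNone τ) = τ := by
    rw [map_equiv_removeNone, h0, Equiv.swap_self]
    rfl
  unfold insFix
  rw [this, hτ]
  ext; simp [Equiv.permCongr_apply]

lemma insFix_inj {n : ℕ} (p : Fin (n+1)) : Function.Injective (insFix p) := by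
  intro a b h
  ext i
  have := congrArg (fun s : Equiv.Perm (Fin (n+1)) => s (p.succAbove i)) h
  simp only [insFix_succAbove] at this
  rw [Fin.succAbove_right_injective this]

lemma NF_rec (n k : ℕ) (hk : k ≤ n) :
    (NF (n+1) k).card = (NF (n+1) (k+1)).card + (NF n k).card := by
  let p : Fin (n+1) := ⟨k, by omega⟩
  have h1 := Finset.card_filter_add_card_filter_not (s := NF (n+1) k) (fun σ => σ p ≠ p)
  have h2 : (NF (n+1) k).filter (fun σ => σ p ≠ p) = NF (n+1) (k+1) := by
    ext σ
    simp only [NF, Finset.mem_filter, Finset.mem_univ, true_and]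
    constructor
    · rintro ⟨h, hp⟩ i hi
      rcases Nat.lt_succ_iff_lt_or_eq.1 hi with h' | h'
      · exact h i h'
      · have : i = p := Fin.ext h'
        rw [this]; exact hp
    · intro h
      exact ⟨fun i hi => h i (by omega), h p (by simp [p])⟩
  have h3 : (NF (n+1) k).filter (fun σ => ¬ σ p ≠ p) = (NF n k).image (insFix p) := by
    ext σ
    simp only [Finset.mem_filter, Finset.mem_image, not_not]
    constructor
    · rintro ⟨h, hp⟩
      obtain ⟨π, rfl⟩ := insFix_surj p σ hp
      exact ⟨π, (insFix_mem p π).1 h, rfl⟩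
    · rintro ⟨π, h, rfl⟩
      exact ⟨(insFix_mem p π).2 h, insFix_self p π⟩
  rw [h2, h3, Finset.card_image_of_injective _ (insFix_inj p)] at h1
  exact h1.symm

lemma NF_tel (n m : ℕ) (hm : m ≤ n + 1) :
    ∑ k ∈ Finset.range m, (NF n k).card + (NF (n+1) m).card = (n+1).factorial := by
  induction m with
  | zero => simp [NF_zero]
  | succ m ih =>
    have := NF_rec n m (by omega)
    have := ih (by omega)
    rw [Finset.sum_range_succ]
    omega

lemma sfp_count {n : ℕ} (π : Equiv.Perm (Fin n)) (h : hasFP π) :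
    sfp π = ((Finset.range n).filter (fun k => π ∈ NF n k)).card := by
  have hne : (fixVals π).Nonempty := by
    obtain ⟨i, hi⟩ := h
    exact ⟨_, i, hi, rfl⟩
  obtain ⟨i, hi, hs⟩ := Nat.sInf_mem hne
  have : (Finset.range n).filter (fun k => π ∈ NF n k) = Finset.range (sfp π) := by
    ext k
    simp only [NF, Finset.mem_filter, Finset.mem_univ, true_and, Finset.mem_range]
    unfold sfp
    constructor
    · rintro ⟨_, h2⟩
      by_contra hc
      exact h2 i (by omega) hi
    · intro hk
      refine ⟨by omega, fun j hj he => ?_⟩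
      have : sInf (fixVals π) ≤ j + 1 := Nat.sInf_le ⟨j, he, rfl⟩
      omega
  rw [this, Finset.card_range]

lemma count_der {n : ℕ} (π : Equiv.Perm (Fin n)) (h : ¬ hasFP π) :
    ((Finset.range n).filter (fun k => π ∈ NF n k)).card = n := by
  rw [Finset.filter_true_of_mem, Finset.card_range]
  intro k _
  simp only [NF, Finset.mem_filter, Finset.mem_univ, true_and]
  exact fun i _ he => h ⟨i, he⟩

lemma beta_eq (n : ℕ) : beta n + n * d n = ∑ k ∈ Finset.range n, (NF n k).card := by
  have h1 : ∑ k ∈ Finset.range n, (NF n k).card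
      = ∑ π : Equiv.Perm (Fin n), ((Finset.range n).filter (fun k => π ∈ NF n k)).card := by
    simp only [Finset.card_filter]
    rw [Finset.sum_comm]
    refine Finset.sum_congr rfl fun k _ => ?_
    rw [← Finset.card_filter]
    congr 1
    ext π
    simp
  have h2 : Finset.univ.filter (fun π : Equiv.Perm (Fin n) => ¬ hasFP π) = NF n n := by
    ext π
    simp [NF, hasFP]
  rw [h1, ← Finset.sum_filter_add_sum_filter_not Finset.univ (fun π => hasFP π)]
  congr 1
  · exact Finset.sum_congr rfl fun π hπ => sfp_count π (Finset.mem_filter.1 hπ).2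
  · rw [Finset.sum_congr rfl fun π hπ => count_der π (Finset.mem_filter.1 hπ).2, h2,
      Finset.sum_const, NF_self, smul_eq_mul, mul_comm]

theorem stmt11 (n : ℕ) (hn : 1 ≤ n) :
    (beta n : ℤ) = (n + 1).factorial - (n + 1) * d n - d (n + 1) := by
  have h1 := NF_tel n (n+1) le_rfl
  have h2 := beta_eq n
  rw [Finset.sum_range_succ, NF_self, NF_self, ← h2] at h1
  rw [← h1]
  push_cast
  ring
end
end

section
/- For all n ≥ 1, the derangement numbers satisfy the recurrence d_n = Σ_{j=2}^n (j-1)·C(n,j)·d_{n-j}, where C(n,j) is the binomial coefficient. -/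
open Classical

noncomputable section

theorem d_eq_num (n : ℕ) : d n = numDerangements n := by
  rw [← card_derangements_fin_eq_numDerangements, d, ← Nat.card_coe_set_eq, ← Nat.card_eq_fintype_card]
  rfl

theorem sumA (n : ℕ) :
    ∑ k ∈ Finset.range (n + 1), (n.choose k : ℤ) * (numDerangements k : ℤ) = (n.factorial : ℤ) := by
  induction n with
  | zero => simp
  | succ n ih =>
    rw [Finset.sum_range_succ']
    have h1 : ∀ k ∈ Finset.range (n + 1),
        ((n + 1).choose (k + 1) : ℤ) * (numDerangements (k + 1) : ℤ) =
        (n + 1) * ((n.choose k : ℤ) * (numDerangements k : ℤ))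
          + (-1) ^ (k + 1) * ((n + 1).choose (k + 1) : ℤ) := by
      intro k _
      have h2 : ((n : ℤ) + 1) * (n.choose k : ℤ) = ((n + 1).choose (k + 1) : ℤ) * (k + 1) := by
        exact_mod_cast Nat.add_one_mul_choose_eq n k
      rw [numDerangements_succ, pow_succ]
      linear_combination (-(numDerangements k : ℤ)) * h2
    rw [Finset.sum_congr rfl h1, Finset.sum_add_distrib, ← Finset.mul_sum, ih]
    have h3 := Int.alternating_sum_range_choose_of_ne (n := n + 1) (by omega)
    rw [Finset.sum_range_succ'] at h3
    simp only [pow_zero, Nat.choose_zero_right, numDerangements_zero, Nat.cast_one, mul_one] at h3 ⊢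
    rw [Nat.factorial_succ]
    push_cast
    linear_combination h3

theorem sumB (n : ℕ) :
    ∑ k ∈ Finset.range (n + 1), (n.choose k : ℤ) * (numDerangements (n - k) : ℤ)
      = (n.factorial : ℤ) := by
  rw [← sumA, ← Finset.sum_range_reflect]
  refine Finset.sum_congr rfl fun k hk => ?_
  have hk' : k ≤ n := by simpa [Nat.lt_succ_iff] using hk
  have e : n + 1 - 1 - k = n - k := by omega
  have e2 : n - (n - k) = k := by omega
  rw [e, e2, Nat.choose_symm hk']

theorem sumC (n : ℕ) :
    ∑ k ∈ Finset.range (n + 2), (k : ℤ) * ((n + 1).choose k : ℤ) * (numDerangements (n + 1 - k) : ℤ)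
      = ((n + 1).factorial : ℤ) := by
  rw [Finset.sum_range_succ', Nat.factorial_succ]
  push_cast
  rw [← sumB, Finset.mul_sum]
  simp only [zero_mul, add_zero]
  refine Finset.sum_congr rfl fun k _ => ?_
  have h2 : ((n : ℤ) + 1) * (n.choose k : ℤ) = ((n + 1).choose (k + 1) : ℤ) * (k + 1) := by
    exact_mod_cast Nat.add_one_mul_choose_eq n k
  linear_combination (-(numDerangements (n - k) : ℤ)) * h2

theorem stmt15 (n : ℕ) (hn : 1 ≤ n) :
    d n = ∑ j ∈ Finset.Icc 2 n, (j - 1) * n.choose j * d (n - j) := by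
  obtain ⟨n, rfl⟩ : ∃ m, n = m + 1 := ⟨n - 1, by omega⟩
  simp only [d_eq_num]
  have hc := sumC n
  rw [← sumB (n + 1), Finset.sum_range_succ', Finset.sum_range_succ',
    Finset.sum_range_succ' _ (n + 1), Finset.sum_range_succ' _ n] at hc
  have e : Finset.Icc 2 (n + 1) = Finset.Ico 2 (n + 2) := by ext; simp; omega
  rw [e, Finset.sum_Ico_eq_sum_range]
  zify
  have h : ∀ k ∈ Finset.range (n + 2 - 2),
      (((2 + k - 1 : ℕ) : ℤ)) * ((n + 1).choose (2 + k) : ℤ) * (numDerangements (n + 1 - (2 + k)) : ℤ)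
      = ((k + 1 + 1 : ℕ) : ℤ) * ((n + 1).choose (k + 1 + 1) : ℤ)
          * (numDerangements (n + 1 - (k + 1 + 1)) : ℤ)
        - ((n + 1).choose (k + 1 + 1) : ℤ) * (numDerangements (n + 1 - (k + 1 + 1)) : ℤ) := by
    intro k _
    have e1 : 2 + k - 1 = k + 1 := by omega
    have e2 : 2 + k = k + 1 + 1 := by omega
    rw [e1, e2]
    push_cast
    ring
  rw [Finset.sum_congr rfl h, Finset.sum_sub_distrib]
  simp only [Nat.add_sub_cancel] at hc ⊢
  simp at hc ⊢
  linarith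
end
end

section
/- For all n ≥ 1, the expected value of the largest fixed point of a uniformly random permutation of [n] conditioned on having at least one fixed point equals d_{n+1} / (n! - d_n). Equivalently, Σ_{π ∈ S_n, π not a derangement} ℓ(π) = d_{n+1} and |S_n \ D_n| = n! - d_n, so E[X_n] = d_{n+1}/(n! - d_n). -/
open Classical

noncomputable section

def cc (n j : ℕ) : ℕ :=
  (Finset.univ.filter (fun π : Equiv.Perm (Fin n) => ∀ i : Fin n, j ≤ (i : ℕ) → π i ≠ i)).card

theorem d_eq_cc (n : ℕ) : d n = cc n 0 := by
  unfold d cc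
  rw [Set.ncard_eq_toFinset_card']
  congr 1
  ext π
  simp

theorem cc_self (n : ℕ) : cc n n = n.factorial := by
  unfold cc
  rw [Finset.filter_true_of_mem]
  · simp [Fintype.card_perm]
  · intro π _ i hi
    exact absurd i.2 (by omega)

def ext1 {n : ℕ} (p : Fin (n + 1)) (σ : Equiv.Perm (Fin n)) : Equiv.Perm (Fin (n + 1)) :=
  (finSuccEquiv' p).symm.permCongr (Equiv.optionCongr σ)

theorem ext1_self {n : ℕ} (p : Fin (n + 1)) (σ : Equiv.Perm (Fin n)) : ext1 p σ p = p := by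
  simp [ext1, Equiv.permCongr_apply]

theorem ext1_succAbove {n : ℕ} (p : Fin (n + 1)) (σ : Equiv.Perm (Fin n)) (i : Fin n) :
    ext1 p σ (p.succAbove i) = p.succAbove (σ i) := by
  simp [ext1, Equiv.permCongr_apply]

theorem ext1_surj {n : ℕ} (p : Fin (n + 1)) (π : Equiv.Perm (Fin (n + 1))) (h : π p = p) :
    ∃ σ, ext1 p σ = π := by
  refine ⟨Equiv.removeNone ((finSuccEquiv' p).permCongr π), ?_⟩
  unfold ext1
  rw [map_equiv_removeNone]
  ext x
  simp [Equiv.permCongr_apply, h]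

theorem cc_mid (n : ℕ) (p : Fin (n + 1)) :
    (Finset.univ.filter (fun π : Equiv.Perm (Fin (n + 1)) =>
      π p = p ∧ ∀ i : Fin (n + 1), (p : ℕ) + 1 ≤ (i : ℕ) → π i ≠ i)).card = cc n p := by
  unfold cc
  symm
  have key : ∀ i : Fin n, ((p : ℕ) + 1 ≤ (p.succAbove i : ℕ)) ↔ (p : ℕ) ≤ (i : ℕ) := by
    intro i
    simp only [Fin.succAbove, Fin.lt_def]
    split_ifs with h <;> simp at h ⊢ <;> omega
  refine Finset.card_bij (fun σ _ => ext1 p σ) ?_ ?_ ?_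
  · intro σ hσ
    simp only [Finset.mem_filter, Finset.mem_univ, true_and] at hσ ⊢
    refine ⟨ext1_self p σ, fun i hi => ?_⟩
    rcases Fin.eq_self_or_eq_succAbove p i with rfl | ⟨k, rfl⟩
    · omega
    · rw [ext1_succAbove]
      intro h
      exact hσ k ((key k).1 hi) (Fin.succAbove_right_injective h)
  · intro σ _ τ _ h
    ext i : 1
    have := congrArg (fun f : Equiv.Perm (Fin (n + 1)) => f (p.succAbove i)) h
    simp only [ext1_succAbove] at this
    exact Fin.succAbove_right_injective this
  · intro π hπ
    simp only [Finset.mem_filter, Finset.mem_univ, true_and] at hπ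
    obtain ⟨σ, rfl⟩ := ext1_surj p π hπ.1
    refine ⟨σ, ?_, rfl⟩
    simp only [Finset.mem_filter, Finset.mem_univ, true_and]
    intro i hi h
    apply hπ.2 (p.succAbove i) ((key i).2 hi)
    rw [ext1_succAbove, h]

theorem cc_succ (n j : ℕ) (hj : j < n + 1) : cc (n + 1) (j + 1) = cc (n + 1) j + cc n j := by
  rw [← cc_mid n ⟨j, hj⟩]
  conv_lhs => unfold cc
  rw [← Finset.card_filter_add_card_filter_not
    (fun π : Equiv.Perm (Fin (n + 1)) => π ⟨j, hj⟩ ≠ ⟨j, hj⟩)]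
  unfold cc
  rw [Finset.filter_filter, Finset.filter_filter]
  congr 2
  · ext π
    simp only [Finset.mem_filter, Finset.mem_univ, true_and]
    constructor
    · rintro ⟨h1, h2⟩ i hi
      rcases Nat.eq_or_lt_of_le hi with h | h
      · have : i = ⟨j, hj⟩ := Fin.ext h.symm
        rw [this]; exact h2
      · exact h1 i h
    · intro h
      exact ⟨fun i hi => h i (by omega), h _ le_rfl⟩
  · ext π
    simp only [Finset.mem_filter, Finset.mem_univ, true_and, not_not]
    exact and_comm

theorem cc_sum (n : ℕ) (m : ℕ) (hm : m ≤ n + 1) :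
    cc (n + 1) m = cc (n + 1) 0 + ∑ j ∈ Finset.range m, cc n j := by
  induction m with
  | zero => simp
  | succ m ih => rw [cc_succ n m (by omega), ih (by omega), Finset.sum_range_succ, add_assoc]

theorem lfp_add (n : ℕ) (π : Equiv.Perm (Fin n)) :
    lfp π + ((Finset.range n).filter
      (fun j => ∀ i : Fin n, j ≤ (i : ℕ) → π i ≠ i)).card = n := by
  have hbd : BddAbove (fixVals π) := ⟨n, by rintro k ⟨i, _, rfl⟩; exact i.2⟩
  have hle : lfp π ≤ n := by
    by_cases hne : (fixVals π).Nonempty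
    · obtain ⟨i, _, h⟩ := Nat.sSup_mem hne hbd
      unfold lfp
      rw [← h]; exact i.2
    · rw [Set.not_nonempty_iff_eq_empty] at hne
      simp [lfp, hne]
  have : (Finset.range n).filter (fun j => ∀ i : Fin n, j ≤ (i : ℕ) → π i ≠ i)
      = Finset.Ico (lfp π) n := by
    ext j
    simp only [Finset.mem_filter, Finset.mem_range, Finset.mem_Ico]
    constructor
    · rintro ⟨h1, h2⟩
      refine ⟨?_, h1⟩
      by_contra hlt
      have hne : (fixVals π).Nonempty := by
        by_contra hne
        rw [Set.not_nonempty_iff_eq_empty] at hne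
        simp [lfp, hne] at hlt
      obtain ⟨i, hi, h⟩ := Nat.sSup_mem hne hbd
      change (i : ℕ) + 1 = lfp π at h
      exact h2 i (by omega) hi
    · rintro ⟨h1, h2⟩
      refine ⟨h2, fun i hi h => ?_⟩
      have : (i : ℕ) + 1 ≤ lfp π := le_csSup hbd ⟨i, h, rfl⟩
      omega
  rw [this, Nat.card_Ico]
  omega

theorem sum_lfp (n : ℕ) : ∑ π : Equiv.Perm (Fin n), lfp π = d (n + 1) := by
  have h1 : ∑ π : Equiv.Perm (Fin n), (lfp π + ((Finset.range n).filter
      (fun j => ∀ i : Fin n, j ≤ (i : ℕ) → π i ≠ i)).card) = n.factorial * n := by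
    rw [Finset.sum_congr rfl (fun π _ => lfp_add n π)]
    simp [Fintype.card_perm]
  have h2 : ∑ π : Equiv.Perm (Fin n), ((Finset.range n).filter
      (fun j => ∀ i : Fin n, j ≤ (i : ℕ) → π i ≠ i)).card = ∑ j ∈ Finset.range n, cc n j := by
    simp only [cc, Finset.card_filter]
    exact Finset.sum_comm
  rw [Finset.sum_add_distrib, h2] at h1
  have h3 := cc_sum n (n + 1) le_rfl
  rw [Finset.sum_range_succ, cc_self, cc_self, Nat.factorial_succ] at h3
  rw [d_eq_cc]
  nlinarith

theorem sum_lfp_filter (n : ℕ) :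
    ∑ π ∈ Finset.univ.filter (fun π : Equiv.Perm (Fin n) => hasFP π), lfp π = d (n + 1) := by
  rw [← sum_lfp]
  refine Finset.sum_subset (Finset.filter_subset _ _) ?_
  intro π _ h
  have h : ∀ i, ¬ π i = i := fun i hi => h (Finset.mem_filter.2 ⟨Finset.mem_univ _, i, hi⟩)
  have : fixVals π = ∅ := by
    ext k
    simp [fixVals, h]
  simp [lfp, this]

theorem card_fp (n : ℕ) :
    (Finset.univ.filter (fun π : Equiv.Perm (Fin n) => hasFP π)).card + d n = n.factorial := by
  have h := Finset.card_filter_add_card_filter_not (s := Finset.univ)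
    (fun π : Equiv.Perm (Fin n) => hasFP π)
  rw [Finset.card_univ, Fintype.card_perm, Fintype.card_fin] at h
  rw [← h, d_eq_cc, cc]
  congr 2
  ext π
  simp [hasFP]

theorem stmt17 (n : ℕ) (hn : 1 ≤ n) :
    ((∑ π ∈ Finset.univ.filter (fun π : Equiv.Perm (Fin n) => hasFP π), lfp π : ℕ) : ℝ) /
        ((Finset.univ.filter (fun π : Equiv.Perm (Fin n) => hasFP π)).card : ℝ) =
      (d (n + 1) : ℝ) / ((n.factorial : ℝ) - d n) := by
  rw [sum_lfp_filter, ← card_fp n]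
  push_cast
  rw [add_sub_cancel_right]
end
end
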